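/- Let ε ∈ (0,1) be irrational with continued fraction expansion ε = [0; a_1, a_2, …] and let x0 ∈ [0,1). Then the Sturmian word u_{ε,x0} of slope ε has finite index, ind(u_{ε,x0}) < +∞, if and only if the sequence of partial quotients (a_n)_{n≥1} is bounded. -/

import Mathlib

/-- The alphabet of 3iet words. -/
inductive L3 | A | B | C
deriving DecidableEq, Inhabited

/-- The three-interval exchange transformation `T_{ε,ℓ}`. -/
noncomputable def T3 (ε ℓ : ℝ) (x : ℝ) : ℝ :=
  if x < ℓ - 1 + ε then x + 1 - ε
  else if x < ε then x + 1 - 2*ε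
  else x - ε

/-- The 3iet word `u_{ε,ℓ,x0}` coding the orbit of `x0` under `T_{ε,ℓ}`. -/
noncomputable def u3 (ε ℓ x0 : ℝ) (n : ℕ) : L3 :=
  if (T3 ε ℓ)^[n] x0 < ℓ - 1 + ε then L3.A
  else if (T3 ε ℓ)^[n] x0 < ε then L3.B
  else L3.C

/-- The two-interval exchange transformation `T_ε`. -/
noncomputable def T2 (ε : ℝ) (x : ℝ) : ℝ := if x < ε then x + 1 - ε else x - ε

/-- The Sturmian word `u_{ε,x0}` of slope `ε` coding the orbit of `x0` under `T_ε`
(letter `0` is `false`, letter `1` is `true`). -/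
noncomputable def u2 (ε x0 : ℝ) (n : ℕ) : Bool := if (T2 ε)^[n] x0 < ε then false else true

/-- `w` is a factor of the infinite word `u`. -/
def IsFactor {α : Type*} (w : List α) (u : ℕ → α) : Prop :=
  ∃ i : ℕ, w = (List.range w.length).map fun j => u (i + j)

/-- The prefix of length `m` of the periodic infinite word `www⋯`;
for `|w| ≤ m` this is the fractional power `w^{m/|w|}`. -/
def powPrefix {α : Type*} [Inhabited α] (w : List α) (m : ℕ) : List α :=
  (List.range m).map fun j => w.getD (j % w.length) default

/-- The index of the factor `w` in the infinite word `u`: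
`sup {r ∈ ℚ, r ≥ 1, r|w| ∈ ℕ | w^r is a factor of u}`, as an element of `ℝ ∪ {+∞}`. -/
noncomputable def factorIndex {α : Type*} [Inhabited α] (u : ℕ → α) (w : List α) : EReal :=
  sSup {x : EReal | ∃ m : ℕ, w.length ≤ m ∧ IsFactor (powPrefix w m) u ∧
    x = (((m : ℝ) / (w.length : ℝ) : ℝ) : EReal)}

/-- The index of the infinite word `u`: `sup {ind(w) | w a nonempty factor of u}`. -/
noncomputable def wordIndex {α : Type*} [Inhabited α] (u : ℕ → α) : EReal :=
  sSup {x : EReal | ∃ w : List α, w ≠ [] ∧ IsFactor w u ∧ x = factorIndex u w}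

/-- The Gauss map `x ↦ {1/x}`. -/
noncomputable def gaussMap (x : ℝ) : ℝ := Int.fract x⁻¹

/-- `cfa ε n` is the partial quotient `a_{n+1}` of the continued fraction
expansion `ε = [0; a₁, a₂, a₃, …]` of the irrational `ε ∈ (0,1)`. -/
noncomputable def cfa (ε : ℝ) (n : ℕ) : ℕ := ⌊(gaussMap^[n] ε)⁻¹⌋₊

/-- The morphism `σ01 : A ↦ 0, B ↦ 01, C ↦ 1`. -/
def sigma01 : L3 → List Bool
  | L3.A => [false]
  | L3.B => [false, true]
  | L3.C => [true]

/-- The morphism `σ10 : A ↦ 0, B ↦ 10, C ↦ 1`. -/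
def sigma10 : L3 → List Bool
  | L3.A => [false]
  | L3.B => [true, false]
  | L3.C => [true]

/-- The image `φ(u₀)φ(u₁)φ(u₂)⋯` of an infinite word `u` under a (nonerasing) morphism `φ`. -/
def morphWord (φ : L3 → List Bool) (u : ℕ → L3) (m : ℕ) : Bool :=
  ((List.range (m+1)).flatMap fun k => φ (u k)).getD m false

/-- `u` is a uniformly recurrent infinite word: every factor occurs infinitely often
with bounded gaps (every window of some length `R` contains an occurrence). -/
def UniformlyRecurrent {α : Type*} (u : ℕ → α) : Prop :=
  ∀ w : List α, IsFactor w u → ∃ R : ℕ, ∀ i : ℕ, ∃ j : ℕ, i ≤ j ∧ j < i + R ∧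
    w = (List.range w.length).map fun t => u (j + t)

/-- `u` is eventually periodic. -/
def EventuallyPeriodic {α : Type*} (u : ℕ → α) : Prop :=
  ∃ N p : ℕ, 0 < p ∧ ∀ n : ℕ, N ≤ n → u (n + p) = u n

/-- The standard words of `ε = [0; a₁, a₂, …]`, with the index shifted by one:
`sw ε 0 = s₋₁ = 1`, `sw ε 1 = s₀ = 0`, `sw ε 2 = s₁ = s₀^{a₁-1} s₋₁`, and
`sw ε (n+3) = s_{n+2} = s_{n+1}^{a_{n+2}} s_n`. -/
noncomputable def sw (ε : ℝ) : ℕ → List Bool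
  | 0 => [true]
  | 1 => [false]
  | 2 => (List.replicate (cfa ε 0 - 1) ([false] : List Bool)).flatten ++ [true]
  | (n+3) => (List.replicate (cfa ε (n+1)) (sw ε (n+2))).flatten ++ sw ε (n+1)

/-- Denominators of the convergents of `ε`, shifted by one: `qq ε 0 = q₋₁ = 0`,
`qq ε 1 = q₀ = 1`, and `qq ε (n+2) = q_{n+1} = a_{n+1} q_n + q_{n-1}`. -/
noncomputable def qq (ε : ℝ) : ℕ → ℕ
  | 0 => 0
  | 1 => 1
  | (n+2) => cfa ε n * qq ε (n+1) + qq ε n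

/-- `u` is a 3iet word. -/
def Is3ietWord (u : ℕ → L3) : Prop :=
  ∃ ε ℓ x0 : ℝ, Irrational ε ∧ 0 < ε ∧ ε < 1 ∧ max ε (1 - ε) < ℓ ∧ ℓ < 1 ∧
    x0 ∈ Set.Ico 0 ℓ ∧ u = u3 ε ℓ x0

/-- `v` is a Sturmian word. -/
def IsSturmianWord (v : ℕ → Bool) : Prop :=
  ∃ ε x0 : ℝ, Irrational ε ∧ 0 < ε ∧ ε < 1 ∧ x0 ∈ Set.Ico (0:ℝ) 1 ∧ v = u2 ε x0

/-- The infinite binary word `v1` is amicable with `v2` (`v1 ∝ v2`). -/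
def AmicableInf (v1 v2 : ℕ → Bool) : Prop :=
  ∃ w : ℕ → L3, v1 = morphWord sigma01 w ∧ v2 = morphWord sigma10 w

/-- The morphism `Φ_k : A ↦ 0, B ↦ 01^{k+1}, C ↦ 01^k`. -/
def Phi (k : ℕ) : L3 → List Bool
  | L3.A => [false]
  | L3.B => false :: List.replicate (k+1) true
  | L3.C => false :: List.replicate k true

/-- The infinite word `B₀B₁B₂⋯` obtained by concatenating the sequence of
(nonempty) blocks `B`. -/
def concatOfBlocks (B : ℕ → List Bool) (m : ℕ) : Bool :=
  ((List.range (m+1)).flatMap B).getD m false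

/-! The letters of `u2 ε x0` are the increments of `n ↦ ⌊x0 - n ε⌋`, so a stretch of the word has
period `q` exactly when `⌊x0 - (n + q) ε⌋ - ⌊x0 - n ε⌋` is a constant `-p` along it, that is,
when the rotation orbit of `x0` avoids an arc of length `|q ε - p|` with endpoint `0`.

If `|q ε - p| ≥ c / q` for all `p` and `q`, then Dirichlet's theorem supplies at every scale a good
rational approximation of `ε` with a denominator of that order, so `O(q)` consecutive orbit points
meet every arc of length `c / q`, and repetitions of period `q` have length `O(q)`. Conversely,
telescoping bounds the frequency with which the floor difference deviates from `-p` by `|q ε - p|`,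
so some stretch of length of order `1 / |q ε - p|` avoids the arc and yields a repetition of that
length. Either way the link to partial quotients is the badly approximable property of `ε`, read off
from its convergents.
-/

/-! ### Partial quotients and badly approximable numbers -/

/-- `ξ` is badly approximable: `|ξ - p / q| ≥ c / q ^ 2` for some `c > 0` and all fractions `p / q`,
with the denominators cleared. -/
def IsBadlyApproximable (ξ : ℝ) : Prop :=
  ∃ c > 0, ∀ q : ℕ, 0 < q → ∀ p : ℤ, c ≤ q * |q * ξ - p|

/-- `ξ = [⌊ξ⌋; a 0, a 1, a 2, …]` is the infinite simple continued fraction expansion of `ξ`; the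
usual index of the partial quotient `a n` is `n + 1`. -/
def HasPartialQuotients (ξ : ℝ) (a : ℕ → ℕ) : Prop :=
  ∀ n, (GenContFract.of ξ).s.get? n = some ⟨1, a n⟩

namespace HasPartialQuotients

variable {ξ : ℝ} {a : ℕ → ℕ}

theorem not_terminatedAt (h : HasPartialQuotients ξ a) (n : ℕ) :
    ¬(GenContFract.of ξ).TerminatedAt n := by
  simp [GenContFract.terminatedAt_iff_s_none, h n]

theorem partDens_get? (h : HasPartialQuotients ξ a) (n : ℕ) :
    (GenContFract.of ξ).partDens.get? n = some (a n : ℝ) :=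
  GenContFract.partDen_eq_s_b (h n)

theorem one_le (h : HasPartialQuotients ξ a) (n : ℕ) : 1 ≤ a n := by
  exact_mod_cast GenContFract.of_one_le_get?_partDen (h.partDens_get? n)

theorem dens_one (h : HasPartialQuotients ξ a) : (GenContFract.of ξ).dens 1 = a 0 :=
  GenContFract.first_den_eq (h 0)

theorem dens_add_two (h : HasPartialQuotients ξ a) (n : ℕ) :
    (GenContFract.of ξ).dens (n + 2) =
      a (n + 1) * (GenContFract.of ξ).dens (n + 1) + (GenContFract.of ξ).dens n := by
  simpa using GenContFract.dens_recurrence (h (n + 1)) rfl rfl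

theorem nums_add_two (h : HasPartialQuotients ξ a) (n : ℕ) :
    (GenContFract.of ξ).nums (n + 2) =
      a (n + 1) * (GenContFract.of ξ).nums (n + 1) + (GenContFract.of ξ).nums n := by
  simpa using GenContFract.nums_recurrence (h (n + 1)) rfl rfl

theorem exists_natCast_eq_dens (h : HasPartialQuotients ξ a) (n : ℕ) :
    ∃ Q : ℕ, (Q : ℝ) = (GenContFract.of ξ).dens n := by
  induction n using Nat.twoStepInduction with
  | zero => exact ⟨1, by simp⟩
  | one => exact ⟨a 0, h.dens_one.symm⟩
  | more n ih ih' =>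
    obtain ⟨Q, hQ⟩ := ih
    obtain ⟨Q', hQ'⟩ := ih'
    exact ⟨a (n + 1) * Q' + Q, by rw [h.dens_add_two, ← hQ, ← hQ']; push_cast; rfl⟩

theorem exists_intCast_eq_nums (h : HasPartialQuotients ξ a) (n : ℕ) :
    ∃ P : ℤ, (P : ℝ) = (GenContFract.of ξ).nums n := by
  induction n using Nat.twoStepInduction with
  | zero => exact ⟨⌊ξ⌋, by simp⟩
  | one => exact ⟨a 0 * ⌊ξ⌋ + 1, by simp [GenContFract.first_num_eq (h 0)]⟩
  | more n ih ih' =>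
    obtain ⟨P, hP⟩ := ih
    obtain ⟨P', hP'⟩ := ih'
    exact ⟨a (n + 1) * P' + P, by rw [h.nums_add_two, ← hP, ← hP']; push_cast; rfl⟩

theorem fib_le_dens (h : HasPartialQuotients ξ a) (n : ℕ) :
    (Nat.fib (n + 1) : ℝ) ≤ (GenContFract.of ξ).dens n :=
  GenContFract.succ_nth_fib_le_of_nth_den (Or.inr (h.not_terminatedAt _))

theorem dens_pos (h : HasPartialQuotients ξ a) (n : ℕ) : 0 < (GenContFract.of ξ).dens n :=
  (Nat.cast_pos.2 (Nat.fib_pos.2 n.succ_pos)).trans_le (h.fib_le_dens n)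

theorem den_convergent (h : HasPartialQuotients ξ a) (n : ℕ) :
    ((ξ.convergent n).den : ℝ) = (GenContFract.of ξ).dens n := by
  obtain ⟨P, hP⟩ := h.exists_intCast_eq_nums n
  obtain ⟨P', hP'⟩ := h.exists_intCast_eq_nums (n + 1)
  obtain ⟨Q, hQ⟩ := h.exists_natCast_eq_dens n
  obtain ⟨Q', hQ'⟩ := h.exists_natCast_eq_dens (n + 1)
  have hdet : P * Q' - Q * P' = (-1) ^ (n + 1) := by
    have := SimpContFract.determinant (s := SimpContFract.of ξ) (h.not_terminatedAt n)
    change (GenContFract.of ξ).nums n * (GenContFract.of ξ).dens (n + 1) -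
      (GenContFract.of ξ).dens n * (GenContFract.of ξ).nums (n + 1) = _ at this
    rw [← hP, ← hP', ← hQ, ← hQ'] at this
    exact_mod_cast this
  have hcop : IsCoprime P Q := by
    have hsq : ((-1 : ℤ) ^ (n + 1)) * (-1) ^ (n + 1) = 1 := by rw [← mul_pow]; simp
    exact ⟨(-1) ^ (n + 1) * Q', -(-1) ^ (n + 1) * P',
      by linear_combination (-1) ^ (n + 1) * hdet + hsq⟩
  have hQ_pos : 0 < (Q : ℤ) := by
    have := h.dens_pos n
    rw [← hQ] at this
    exact_mod_cast this
  have hconv : ξ.convergent n = (P : ℚ) / (Q : ℤ) := by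
    have := Real.convs_eq_convergent ξ n
    rw [GenContFract.conv_eq_num_div_den, ← hP, ← hQ] at this
    exact_mod_cast this.symm
  have hden := Rat.den_div_eq_of_coprime hQ_pos (Int.isCoprime_iff_gcd_eq_one.1 hcop)
  rw [hconv, ← hQ]
  exact_mod_cast hden

theorem abs_sub_convergent_le (h : HasPartialQuotients ξ a) (n : ℕ) :
    |ξ - ξ.convergent n| ≤ 1 / (a n * (ξ.convergent n).den ^ 2) := by
  have := GenContFract.abs_sub_convergents_le' (h.partDens_get? n)
  rwa [Real.convs_eq_convergent, ← h.den_convergent, mul_assoc, ← sq] at this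

theorem abs_sub_convergent_le_one_div_den_sq (h : HasPartialQuotients ξ a) (n : ℕ) :
    |ξ - ξ.convergent n| ≤ 1 / (ξ.convergent n).den ^ 2 := by
  refine (h.abs_sub_convergent_le n).trans ?_
  have ha : (1 : ℝ) ≤ a n := by exact_mod_cast h.one_le n
  gcongr
  exact le_mul_of_one_le_left (by positivity) ha

theorem dens_succ_le (h : HasPartialQuotients ξ a) (n : ℕ) :
    (GenContFract.of ξ).dens (n + 1) ≤ (a n + 1) * (GenContFract.of ξ).dens n := by
  cases n with
  | zero => simp [h.dens_one]
  | succ n =>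
    rw [h.dens_add_two]
    linarith [GenContFract.of_den_mono (v := ξ) (n := n)]

theorem exists_den_convergent_mem_Icc {K : ℕ} (h : HasPartialQuotients ξ a) (hK : ∀ n, a n ≤ K)
    {N : ℕ} (hN : 0 < N) :
    ∃ n, (ξ.convergent n).den ∈ Set.Icc N ((K + 1) * N) := by
  have hex : ∃ n, N ≤ (ξ.convergent n).den := by
    refine ⟨N, ?_⟩
    have hfib : Nat.fib (N + 1) ≤ (ξ.convergent N).den := by
      exact_mod_cast (h.fib_le_dens N).trans_eq (h.den_convergent N).symm
    exact (Nat.le_of_succ_le_succ (Nat.le_fib_add_one (N + 1))).trans hfib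
  classical
  refine ⟨Nat.find hex, Nat.find_spec hex, ?_⟩
  rcases hn : Nat.find hex with _ | n
  · simpa using Nat.succ_le_of_lt (Nat.mul_pos K.succ_pos hN)
  · have hlt : (ξ.convergent n).den < N := not_le.1 (Nat.find_min hex (by omega))
    have hsucc : (ξ.convergent (n + 1)).den ≤ (a n + 1) * (ξ.convergent n).den := by
      have := h.dens_succ_le n
      rw [← h.den_convergent, ← h.den_convergent] at this
      exact_mod_cast this
    exact hsucc.trans (Nat.mul_le_mul (Nat.succ_le_succ (hK n)) hlt.le)

end HasPartialQuotients

theorem one_div_two_mul_den_le_abs_mul_sub {ξ : ℝ} {r : ℚ} (hr : |ξ - r| ≤ 1 / r.den ^ 2)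
    {q : ℕ} (hq : 0 < q) (hqr : 2 * q ≤ r.den) (p : ℤ) :
    1 / (2 * r.den) ≤ |q * ξ - p| := by
  have hne : (q : ℤ) * r.num - p * r.den ≠ 0 := fun h0 => by
    have hdvd : (r.den : ℤ) ∣ q := (Rat.isCoprime_num_den r).symm.dvd_of_dvd_mul_right
      ⟨p, by linear_combination h0⟩
    have := Int.le_of_dvd (by exact_mod_cast hq) hdvd
    omega
  have hfrac : 1 / (r.den : ℝ) ≤ |(q * r - p : ℝ)| := by
    have hrden : (q * r - p : ℝ) = ((q * r.num - p * r.den : ℤ) : ℝ) / r.den := by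
      rw [Rat.cast_def]; push_cast; field_simp
    rw [hrden, abs_div, Nat.abs_cast]
    gcongr
    exact_mod_cast Int.one_le_abs hne
  have herr : q * |ξ - r| ≤ 1 / (2 * r.den) := calc
    q * |ξ - r| ≤ (r.den / 2) * (1 / r.den ^ 2) := by
      gcongr
      rw [le_div_iff₀ two_pos, mul_comm]
      exact_mod_cast hqr
    _ = 1 / (2 * r.den) := by field_simp
  have htri : |(q * r - p : ℝ)| ≤ |q * ξ - p| + q * |ξ - r| := by
    have := abs_sub (q * ξ - p) (q * (ξ - r))
    rwa [abs_mul, Nat.abs_cast, show q * ξ - p - q * (ξ - r) = q * r - p by ring] at this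
  have hhalf : 1 / (r.den : ℝ) = 1 / (2 * r.den) + 1 / (2 * r.den) := by field_simp; norm_num
  linarith

theorem abs_den_mul_sub_num (ξ : ℝ) (r : ℚ) : |r.den * ξ - r.num| = r.den * |ξ - r| := by
  have hnum : (r.num : ℝ) = r.den * r := by exact_mod_cast (Rat.den_mul_eq_num r).symm
  rw [hnum, ← mul_sub, abs_mul, Nat.abs_cast]

theorem IsBadlyApproximable.exists_forall_le {ξ : ℝ} {a : ℕ → ℕ} (hξ : IsBadlyApproximable ξ)
    (h : HasPartialQuotients ξ a) : ∃ K : ℕ, ∀ n, a n ≤ K := by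
  obtain ⟨c, hc, hle⟩ := hξ
  refine ⟨⌊1 / c⌋₊, fun n => Nat.le_floor ?_⟩
  set r := ξ.convergent n
  have ha : (0 : ℝ) < a n := by exact_mod_cast h.one_le n
  rw [le_one_div ha hc]
  calc c ≤ r.den * |r.den * ξ - r.num| := hle _ r.den_pos _
    _ = r.den ^ 2 * |ξ - r| := by
      rw [abs_den_mul_sub_num, sq, mul_assoc]
    _ ≤ r.den ^ 2 * (1 / (a n * r.den ^ 2)) := by gcongr; exact h.abs_sub_convergent_le n
    _ = 1 / a n := by field_simp

theorem HasPartialQuotients.isBadlyApproximable {ξ : ℝ} {a : ℕ → ℕ}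
    (h : HasPartialQuotients ξ a) {K : ℕ} (hK : ∀ n, a n ≤ K) : IsBadlyApproximable ξ := by
  refine ⟨1 / (4 * (K + 1)), by positivity, fun q hq p => ?_⟩
  obtain ⟨n, hn, hn'⟩ := h.exists_den_convergent_mem_Icc hK (N := 2 * q) (by omega)
  have hupper : ((ξ.convergent n).den : ℝ) ≤ (K + 1) * (2 * q) := by exact_mod_cast hn'
  calc 1 / (4 * (K + 1) : ℝ) = q * (1 / (2 * ((K + 1) * (2 * q)))) := by field_simp; norm_num
    _ ≤ q * (1 / (2 * (ξ.convergent n).den)) := by gcongr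
    _ ≤ q * |q * ξ - p| := by
      gcongr
      exact one_div_two_mul_den_le_abs_mul_sub (h.abs_sub_convergent_le_one_div_den_sq n) hq hn p

theorem HasPartialQuotients.isBadlyApproximable_iff {ξ : ℝ} {a : ℕ → ℕ}
    (h : HasPartialQuotients ξ a) : IsBadlyApproximable ξ ↔ ∃ K : ℕ, ∀ n, a n ≤ K :=
  ⟨fun hξ => hξ.exists_forall_le h, fun ⟨_, hK⟩ => h.isBadlyApproximable hK⟩

/-! ### The Gauss map -/

theorem irrational_iterate_gaussMap {ε : ℝ} (hε : Irrational ε) (n : ℕ) :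
    Irrational (gaussMap^[n] ε) := by
  induction n with
  | zero => exact hε
  | succ n ih =>
    rw [Function.iterate_succ_apply']
    exact ih.inv.sub_intCast ⌊(gaussMap^[n] ε)⁻¹⌋

theorem iterate_gaussMap_mem_Ico {ε : ℝ} (hε : ε ∈ Set.Ico (0 : ℝ) 1) (n : ℕ) :
    gaussMap^[n] ε ∈ Set.Ico (0 : ℝ) 1 :=
  have hmaps : Set.MapsTo gaussMap (Set.Ico 0 1) (Set.Ico 0 1) :=
    fun _ _ => ⟨Int.fract_nonneg _, Int.fract_lt_one _⟩
  hmaps.iterate n hε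

theorem exists_stream_eq_some_iterate_gaussMap {ε : ℝ} (hirr : Irrational ε)
    (hε : ε ∈ Set.Ico (0 : ℝ) 1) (n : ℕ) :
    ∃ b : ℤ, GenContFract.IntFractPair.stream ε n = some ⟨b, gaussMap^[n] ε⟩ := by
  induction n with
  | zero => exact ⟨⌊ε⌋, by simp [GenContFract.IntFractPair.stream_zero,
      GenContFract.IntFractPair.of, Int.fract_eq_self.2 hε]⟩
  | succ n ih =>
    obtain ⟨b, hb⟩ := ih
    rw [Function.iterate_succ_apply']
    exact ⟨_, GenContFract.IntFractPair.stream_succ_of_some hb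
      (irrational_iterate_gaussMap hirr n).ne_zero⟩

theorem hasPartialQuotients_cfa {ε : ℝ} (hirr : Irrational ε) (hε : ε ∈ Set.Ico (0 : ℝ) 1) :
    HasPartialQuotients ε (cfa ε) := fun n => by
  obtain ⟨b, hb⟩ := exists_stream_eq_some_iterate_gaussMap hirr hε n
  rw [GenContFract.get?_of_eq_some_of_get?_intFractPair_stream_fr_ne_zero hb
    (irrational_iterate_gaussMap hirr n).ne_zero, cfa,
    natCast_floor_eq_intCast_floor (inv_nonneg.2 (iterate_gaussMap_mem_Ico hε n).1)]
  rfl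

/-! ### Orbits of a rotation by a badly approximable angle -/

theorem exists_nat_mul_rat_add_int_eq_div_den (r : ℚ) (t : ℤ) :
    ∃ j < r.den, ∃ s : ℤ, j * r + s = t / r.den := by
  obtain ⟨u, v, huv⟩ := Rat.isCoprime_num_den r
  have hden : (0 : ℤ) < r.den := by exact_mod_cast r.den_pos
  obtain ⟨j, hj⟩ := Int.eq_ofNat_of_zero_le (Int.emod_nonneg (u * t) hden.ne')
  refine ⟨j, by exact_mod_cast hj ▸ Int.emod_lt_of_pos (u * t) hden,
    v * t + u * t / r.den * r.num, ?_⟩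
  have hdiv : (r.den : ℤ) * (u * t / r.den) + j = u * t := hj ▸ Int.mul_ediv_add_emod _ _
  have hint : j * r.num + (v * t + u * t / r.den * r.num) * r.den = t := by
    linear_combination t * huv + r.num * hdiv
  rw [eq_div_iff (by exact_mod_cast hden.ne'), add_mul, mul_assoc, Rat.mul_den_eq_num]
  exact_mod_cast hint

/-- The first `r.den` orbit points stay within `1 / r.den` of a translate of the subgroup of order
`r.den` of the circle. -/
theorem exists_orbit_mem_Ioo_of_abs_sub_le {ξ : ℝ} {r : ℚ} (hr : |ξ - r| ≤ 1 / r.den ^ 2)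
    (x a : ℝ) : ∃ j < r.den, ∃ s : ℤ, x - j * ξ - s ∈ Set.Ioo a (a + 3 / r.den) := by
  set t : ℤ := ⌊r.den * (x - a)⌋ - 1 with ht
  obtain ⟨j, hj, s, hjs⟩ := exists_nat_mul_rat_add_int_eq_div_den r t
  have : (0 : ℝ) < r.den := by exact_mod_cast r.den_pos
  have hjs' : (j * r + s : ℝ) = t / r.den := by exact_mod_cast hjs
  have hgrid : x - a - t / r.den ∈ Set.Ico (1 / r.den : ℝ) (2 / r.den) := by
    have hfloor := Int.floor_le (r.den * (x - a))
    have hfloor' := Int.lt_floor_add_one (r.den * (x - a))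
    rw [show x - a - t / r.den = (r.den * (x - a) - t) / r.den by field_simp, ht]
    push_cast
    constructor
    · gcongr; linarith
    · gcongr; linarith
  have hdrift : |j * (ξ - r)| < 1 / r.den := calc
    |j * (ξ - r)| ≤ j * (1 / r.den ^ 2) := by rw [abs_mul, Nat.abs_cast]; gcongr
    _ < r.den * (1 / r.den ^ 2) := by gcongr
    _ = 1 / r.den := by field_simp
  have hsplit : x - j * ξ - s = a + (x - a - t / r.den) - j * (ξ - r) := by
    linear_combination -hjs'
  rw [abs_lt] at hdrift
  have hthree : (3 / r.den : ℝ) = 2 / r.den + 1 / r.den := by ring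
  exact ⟨j, hj, s, by linarith [hgrid.1, hdrift.2], by linarith [hgrid.2, hdrift.1]⟩

/-- Dirichlet's theorem gives an approximation with denominator at most `n`, and bad
approximability forces this denominator to be at least proportional to `n`. -/
theorem IsBadlyApproximable.exists_orbit_mem_Ioo {ξ : ℝ} (hξ : IsBadlyApproximable ξ) :
    ∃ C : ℕ, ∀ N > 0, ∀ x a : ℝ, ∃ j < C * N, ∃ s : ℤ,
      x - j * ξ - s ∈ Set.Ioo a (a + 1 / N) := by
  obtain ⟨c, hc, hle⟩ := hξ
  set C := ⌈3 / c⌉₊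
  have hC : 3 ≤ c * C := by
    rw [mul_comm, ← div_le_iff₀ hc]
    exact Nat.le_ceil _
  refine ⟨C, fun N hN x a => ?_⟩
  have hCN : 0 < C * N := Nat.mul_pos (Nat.ceil_pos.2 (by positivity)) hN
  obtain ⟨r, hr, hrle⟩ := Real.exists_rat_abs_sub_le_and_den_le ξ hCN
  have hden : (0 : ℝ) < r.den := by exact_mod_cast r.den_pos
  have hNr : 3 * N ≤ (r.den : ℝ) := by
    have hbad : c ≤ r.den / (C * N + 1) := calc
      c ≤ r.den * |r.den * ξ - r.num| := hle _ r.den_pos _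
      _ = r.den * (r.den * |ξ - r|) := by rw [abs_den_mul_sub_num]
      _ ≤ r.den * (r.den * (1 / (((C * N : ℕ) + 1) * r.den))) := by gcongr
      _ = r.den / (C * N + 1) := by push_cast; field_simp
    rw [le_div_iff₀ (by positivity)] at hbad
    calc 3 * (N : ℝ) ≤ c * C * N := by gcongr
      _ ≤ c * (C * N + 1) := by linarith
      _ ≤ r.den := hbad
  have hr' : |ξ - r| ≤ 1 / r.den ^ 2 := by
    refine hr.trans ?_
    rw [sq]
    gcongr
    exact_mod_cast hrle.trans (Nat.le_succ _)
  obtain ⟨j, hj, s, hs⟩ := exists_orbit_mem_Ioo_of_abs_sub_le hr' x a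
  have hscale : 3 / (r.den : ℝ) ≤ 1 / N := by
    rw [div_le_div_iff₀ hden (by exact_mod_cast hN)]
    linarith
  exact ⟨j, hj.trans_le hrle, s, hs.1, hs.2.trans_le (by linarith)⟩

theorem floor_sub_ne_floor {y η : ℝ} {s : ℤ} (h : y - s ∈ Set.Ioo (min 0 η) (max 0 η)) :
    ⌊y - η⌋ ≠ ⌊y⌋ := by
  rcases le_total 0 η with hη | hη
  · rw [min_eq_left hη, max_eq_right hη] at h
    exact ((Int.floor_lt.2 (by linarith [h.2])).trans_le (Int.le_floor.2 (by linarith [h.1]))).ne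
  · rw [min_eq_right hη, max_eq_left hη] at h
    exact ((Int.floor_lt.2 (by linarith [h.2])).trans_le (Int.le_floor.2 (by linarith [h.1]))).ne'

/-- The integer part of `x - n ε`; along the orbit coded by `u2 ε x`, its negative counts the
letters `0` among the first `n`. -/
noncomputable def orbitFloor (ε x : ℝ) (n : ℕ) : ℤ := ⌊x - n * ε⌋

theorem orbitFloor_add_sub (ε x : ℝ) (n q : ℕ) (p : ℤ) :
    orbitFloor ε x (n + q) + p = ⌊x - n * ε - (q * ε - p)⌋ := by
  rw [orbitFloor, ← Int.floor_add_intCast]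
  congr 1
  push_cast
  ring

theorem IsBadlyApproximable.exists_orbitFloor_add_ne {ε : ℝ} (hε : IsBadlyApproximable ε) (x : ℝ) :
    ∃ C : ℕ, ∀ i q : ℕ, 0 < q → ∀ p : ℤ, ∃ j < C * q,
      orbitFloor ε x (i + j + q) + p ≠ orbitFloor ε x (i + j) := by
  obtain ⟨C, hC⟩ := hε.exists_orbit_mem_Ioo
  obtain ⟨c, hc, hle⟩ := hε
  set D := ⌈1 / c⌉₊
  have hD : 1 / c ≤ D := Nat.le_ceil _
  have hD_pos : 0 < D := Nat.ceil_pos.2 (by positivity)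
  refine ⟨C * D, fun i q hq p => ?_⟩
  set η := q * ε - p
  have hη : 1 / ((D * q : ℕ) : ℝ) ≤ |η| := by
    have : (0 : ℝ) < q := by exact_mod_cast hq
    rw [div_le_iff₀ hc] at hD
    rw [div_le_iff₀ (by positivity), Nat.cast_mul]
    nlinarith [mul_le_mul_of_nonneg_left (hle q hq p) (Nat.cast_nonneg D)]
  obtain ⟨j, hj, s, hs⟩ := hC (D * q) (by positivity) (x - i * ε) (min 0 η)
  refine ⟨j, by rwa [mul_assoc], ?_⟩
  rw [orbitFloor_add_sub, orbitFloor]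
  refine floor_sub_ne_floor (s := s) ?_
  have hlen : max 0 η - min 0 η = |η| := by rw [max_sub_min_eq_abs, sub_zero]
  rw [show x - (i + j : ℕ) * ε - s = x - i * ε - j * ε - s by push_cast; ring]
  exact ⟨hs.1, hs.2.trans_le (by linarith)⟩

/-! ### Long windows of constant drift -/

theorem sum_range_add_sub_comm {M : Type*} [AddCommGroup M] (g : ℕ → M) (N q : ℕ) :
    ∑ n ∈ Finset.range N, (g (n + q) - g n) = ∑ n ∈ Finset.range q, (g (n + N) - g n) := by
  have hN := Finset.sum_range_add g q N
  have hq := Finset.sum_range_add g N q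
  rw [add_comm q N, hq] at hN
  simp only [Finset.sum_sub_distrib, add_comm _ q, add_comm _ N, sub_eq_sub_iff_add_eq_add]
  rw [add_comm, ← hN, add_comm]

theorem le_sum_abs_of_forall_exists_ne_zero {d : ℕ → ℤ} {L : ℕ}
    (h : ∀ i, ∃ j < L, d (i + j) ≠ 0) (m : ℕ) : m ≤ ∑ n ∈ Finset.range (m * L), |d n| := by
  induction m with
  | zero => simp
  | succ m ih =>
    obtain ⟨j, hj, hne⟩ := h (m * L)
    have hblock : 1 ≤ ∑ k ∈ Finset.range L, |d (m * L + k)| :=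
      (Int.one_le_abs hne).trans <| Finset.single_le_sum (f := fun k => |d (m * L + k)|)
        (fun _ _ => abs_nonneg _) (Finset.mem_range.2 hj)
    rw [Nat.succ_mul, Finset.sum_range_add]
    push_cast
    linarith

theorem sum_abs_floor_sub_sub_floor {ι : Type*} (s : Finset ι) (y : ι → ℝ) (η : ℝ) :
    ∑ i ∈ s, |⌊y i - η⌋ - ⌊y i⌋| = |∑ i ∈ s, (⌊y i - η⌋ - ⌊y i⌋)| := by
  rcases le_total 0 η with hη | hη
  · have hmono : ∀ i ∈ s, 0 ≤ ⌊y i⌋ - ⌊y i - η⌋ := fun i _ =>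
      sub_nonneg.2 (Int.floor_mono (by linarith))
    rw [← abs_neg, ← Finset.sum_neg_distrib]
    simp only [neg_sub, abs_sub_comm ⌊y _ - η⌋]
    rw [Finset.abs_sum_of_nonneg hmono, Finset.sum_congr rfl fun i hi => abs_of_nonneg (hmono i hi)]
  · have hmono : ∀ i ∈ s, 0 ≤ ⌊y i - η⌋ - ⌊y i⌋ := fun i _ =>
      sub_nonneg.2 (Int.floor_mono (by linarith))
    rw [Finset.abs_sum_of_nonneg hmono, Finset.sum_congr rfl fun i hi => abs_of_nonneg (hmono i hi)]

theorem abs_orbitFloor_add_sub_add_le (ε x : ℝ) (n N : ℕ) :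
    |(orbitFloor ε x (n + N) - orbitFloor ε x n + N * ε : ℝ)| ≤ 1 := by
  have h := Int.floor_le (x - n * ε)
  have h' := Int.lt_floor_add_one (x - n * ε)
  have hN := Int.floor_le (x - (n + N : ℕ) * ε)
  have hN' := Int.lt_floor_add_one (x - (n + N : ℕ) * ε)
  push_cast at hN hN'
  simp only [orbitFloor]
  push_cast
  rw [abs_le]
  constructor <;> linarith

theorem sum_abs_orbitFloor_add_sub_le (ε x : ℝ) (q N : ℕ) (p : ℤ) :
    ((∑ n ∈ Finset.range N, |orbitFloor ε x (n + q) + p - orbitFloor ε x n| : ℤ) : ℝ) ≤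
      N * |q * ε - p| + q := by
  have hsign : ∑ n ∈ Finset.range N, |orbitFloor ε x (n + q) + p - orbitFloor ε x n| =
      |∑ n ∈ Finset.range N, (orbitFloor ε x (n + q) + p - orbitFloor ε x n)| := by
    simp only [orbitFloor_add_sub]
    exact sum_abs_floor_sub_sub_floor _ (fun n : ℕ => x - n * ε) _
  have htelescope : ∑ n ∈ Finset.range N, (orbitFloor ε x (n + q) + p - orbitFloor ε x n) =
      ∑ n ∈ Finset.range q, (orbitFloor ε x (n + N) - orbitFloor ε x n) + N * p := by
    rw [← sum_range_add_sub_comm]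
    simp [add_sub_right_comm, Finset.sum_add_distrib]
  have hdrift : ((∑ n ∈ Finset.range N, (orbitFloor ε x (n + q) + p - orbitFloor ε x n) : ℤ) : ℝ) =
      ∑ n ∈ Finset.range q, (orbitFloor ε x (n + N) - orbitFloor ε x n + N * ε : ℝ) -
        N * (q * ε - p) := by
    rw [htelescope]
    push_cast
    simp only [Finset.sum_add_distrib, Finset.sum_const, Finset.card_range, nsmul_eq_mul]
    ring
  have hbound :
      |∑ n ∈ Finset.range q, (orbitFloor ε x (n + N) - orbitFloor ε x n + N * ε : ℝ)| ≤ q := by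
    refine (Finset.abs_sum_le_sum_abs _ _).trans ?_
    simpa using Finset.sum_le_card_nsmul (Finset.range q) _ 1
      fun n _ => abs_orbitFloor_add_sub_add_le ε x n N
  rw [hsign, Int.cast_abs, hdrift]
  refine (abs_sub _ _).trans ?_
  rw [abs_mul, Nat.abs_cast]
  linarith

/-- Otherwise the floor difference over `q` steps would deviate from `-p` with frequency at least
`1 / L`, whereas its average is `-q ε`. -/
theorem exists_window_orbitFloor_add_eq (ε x : ℝ) {q L : ℕ} {p : ℤ} (hL : L * |q * ε - p| < 1) :
    ∃ i, ∀ j < L, orbitFloor ε x (i + j + q) + p = orbitFloor ε x (i + j) := by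
  by_contra! hne
  have hjump (i : ℕ) :
      ∃ j < L, orbitFloor ε x (i + j + q) + p - orbitFloor ε x (i + j) ≠ 0 := by
    obtain ⟨j, hj, hji⟩ := hne i
    exact ⟨j, hj, sub_ne_zero.2 hji⟩
  have hcount (m : ℕ) : (m : ℝ) ≤ (m * L : ℕ) * |q * ε - p| + q := by
    refine le_trans ?_ (sum_abs_orbitFloor_add_sub_le ε x q (m * L) p)
    exact_mod_cast le_sum_abs_of_forall_exists_ne_zero hjump m
  obtain ⟨m, hm⟩ := exists_nat_gt (q / (1 - L * |q * ε - p|))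
  rw [div_lt_iff₀ (by linarith)] at hm
  have := hcount m
  push_cast at this
  linarith

/-! ### Repetitions in infinite words -/

/-- The window `u i, …, u (i + m + q - 1)` of the infinite word `u` has period `q`. -/
def HasPeriodOn {α : Type*} (u : ℕ → α) (q i m : ℕ) : Prop :=
  ∀ j < m, u (i + j + q) = u (i + j)

theorem HasPeriodOn.eq_mod {α : Type*} {u : ℕ → α} {q i m : ℕ}
    (h : HasPeriodOn u q i m) {j : ℕ} (hj : j < m + q) :
    u (i + j % q) = u (i + j) := by
  induction j using Nat.strong_induction_on with
  | _ j ih =>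
    rcases lt_or_ge j q with hjq | hjq
    · rw [Nat.mod_eq_of_lt hjq]
    rcases q.eq_zero_or_pos with rfl | hq
    · rw [Nat.mod_zero]
    · obtain ⟨k, rfl⟩ := Nat.exists_eq_add_of_le' hjq
      rw [Nat.add_mod_right, ih k (by omega) (by omega), ← h k (by omega), add_assoc]

section Index

variable {α : Type*} [Inhabited α] {u : ℕ → α}

theorem isFactor_powPrefix_iff {w : List α} {m : ℕ} :
    IsFactor (powPrefix w m) u ↔ ∃ i, ∀ j < m, w.getD (j % w.length) default = u (i + j) := by
  simp only [IsFactor, powPrefix, List.length_map, List.length_range, List.map_inj_left,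
    List.mem_range]

theorem HasPeriodOn.div_le_wordIndex {q i m : ℕ} (h : HasPeriodOn u q i m) (hq : 0 < q) :
    (((m + q) / q : ℝ) : EReal) ≤ wordIndex u := by
  set w : List α := (List.range q).map fun j => u (i + j) with hw
  have hlen : w.length = q := by simp [hw]
  have hpow : IsFactor (powPrefix w (m + q)) u := by
    refine isFactor_powPrefix_iff.2 ⟨i, fun j hj => ?_⟩
    have hjq : j % q < q := Nat.mod_lt j hq
    rw [hlen, ← h.eq_mod hj]
    simp [hw, hjq]
  calc (((m + q) / q : ℝ) : EReal) ≤ factorIndex u w :=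
        le_sSup ⟨m + q, by omega, hpow, by rw [hlen]; push_cast; rfl⟩
    _ ≤ wordIndex u :=
      le_sSup ⟨w, List.ne_nil_of_length_pos (hlen ▸ hq), ⟨i, by rw [hlen]⟩, rfl⟩

theorem IsFactor.exists_hasPeriodOn {w : List α} {m : ℕ} (h : IsFactor (powPrefix w m) u) :
    ∃ i, HasPeriodOn u w.length i (m - w.length) := by
  obtain ⟨i, hi⟩ := isFactor_powPrefix_iff.1 h
  refine ⟨i, fun j hj => ?_⟩
  rw [← hi j (by omega), add_assoc, ← hi (j + w.length) (by omega), Nat.add_mod_right]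

theorem wordIndex_lt_top_iff :
    wordIndex u < ⊤ ↔ ∃ C : ℕ, ∀ q > 0, ∀ i m, HasPeriodOn u q i m → m ≤ C * q := by
  constructor
  · intro hfin
    obtain ⟨r, hr, -⟩ := EReal.lt_iff_exists_real_btwn.1 hfin
    refine ⟨⌈r⌉₊, fun q hq i m h => ?_⟩
    have hq' : (0 : ℝ) < q := by exact_mod_cast hq
    have hlt : (m + q) / q < r := by exact_mod_cast (h.div_le_wordIndex hq).trans_lt hr
    rw [div_lt_iff₀ hq'] at hlt
    have : (m : ℝ) ≤ ⌈r⌉₊ * q := by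
      nlinarith [mul_le_mul_of_nonneg_right (Nat.le_ceil r) hq'.le]
    exact_mod_cast this
  · rintro ⟨C, hC⟩
    refine lt_of_le_of_lt (b := ((C + 1 : ℝ) : EReal)) ?_ (EReal.coe_lt_top _)
    refine sSup_le ?_
    rintro _ ⟨w, hw, -, rfl⟩
    refine sSup_le ?_
    rintro _ ⟨m, -, hfac, rfl⟩
    have hlen : 0 < w.length := List.length_pos_iff.2 hw
    obtain ⟨i, hi⟩ := hfac.exists_hasPeriodOn
    have hle : m ≤ C * w.length + w.length := Nat.sub_le_iff_le_add.1 (hC _ hlen i _ hi)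
    rw [EReal.coe_le_coe_iff, div_le_iff₀ (by exact_mod_cast hlen), add_mul, one_mul]
    exact_mod_cast hle

end Index

/-! ### Sturmian words -/

section Sturmian

variable {ε x0 : ℝ}

theorem iterate_T2 (hε : ε ∈ Set.Icc (0 : ℝ) 1) (hx0 : x0 ∈ Set.Ico (0 : ℝ) 1) (n : ℕ) :
    (T2 ε)^[n] x0 = Int.fract (x0 - n * ε) := by
  induction n with
  | zero => simp [Int.fract_eq_self.2 hx0]
  | succ n ih =>
    have hfract_nonneg := Int.fract_nonneg (x0 - n * ε)
    have hfract_lt := Int.fract_lt_one (x0 - n * ε)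
    have hsum := Int.floor_add_fract (x0 - n * ε)
    rw [Function.iterate_succ_apply', ih, T2, eq_comm]
    split_ifs with h
    · refine Int.fract_eq_iff.2 ⟨by linarith [hε.2], by linarith, ⌊x0 - n * ε⌋ - 1, ?_⟩
      push_cast
      linarith
    · refine Int.fract_eq_iff.2 ⟨by linarith, by linarith [hε.1], ⌊x0 - n * ε⌋, ?_⟩
      push_cast
      linarith

theorem orbitFloor_succ (hε : ε ∈ Set.Icc (0 : ℝ) 1) (hx0 : x0 ∈ Set.Ico (0 : ℝ) 1) (n : ℕ) :
    orbitFloor ε x0 (n + 1) = orbitFloor ε x0 n - if u2 ε x0 n then 0 else 1 := by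
  have hfract_nonneg := Int.fract_nonneg (x0 - n * ε)
  have hfract_lt := Int.fract_lt_one (x0 - n * ε)
  have hsum := Int.floor_add_fract (x0 - n * ε)
  rw [u2, iterate_T2 hε hx0, orbitFloor, orbitFloor, Int.floor_eq_iff]
  by_cases h : Int.fract (x0 - n * ε) < ε
  · simp only [h, if_true, Bool.false_eq_true, if_false]
    push_cast
    constructor <;> linarith [hε.2]
  · simp only [h, if_false, if_true]
    push_cast
    constructor <;> linarith [hε.1]

theorem u2_eq_iff (hε : ε ∈ Set.Icc (0 : ℝ) 1) (hx0 : x0 ∈ Set.Ico (0 : ℝ) 1) (m n : ℕ) :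
    u2 ε x0 m = u2 ε x0 n ↔
      orbitFloor ε x0 (m + 1) - orbitFloor ε x0 m =
        orbitFloor ε x0 (n + 1) - orbitFloor ε x0 n := by
  rw [orbitFloor_succ hε hx0, orbitFloor_succ hε hx0]
  cases u2 ε x0 m <;> cases u2 ε x0 n <;> simp

theorem hasPeriodOn_u2_iff (hε : ε ∈ Set.Icc (0 : ℝ) 1) (hx0 : x0 ∈ Set.Ico (0 : ℝ) 1)
    (q i m : ℕ) :
    HasPeriodOn (u2 ε x0) q i m ↔
      ∃ p : ℤ, ∀ j ≤ m, orbitFloor ε x0 (i + j + q) + p = orbitFloor ε x0 (i + j) := by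
  constructor
  · intro h
    refine ⟨orbitFloor ε x0 i - orbitFloor ε x0 (i + q), fun j hj => ?_⟩
    induction j with
    | zero => simp
    | succ j ih =>
      have hletter := (u2_eq_iff hε hx0 _ _).1 (h j hj)
      rw [show i + (j + 1) + q = i + j + q + 1 by ring, ← add_assoc i j 1]
      linarith [ih (Nat.le_of_succ_le hj)]
  · rintro ⟨p, hp⟩ j hj
    have hnext := hp (j + 1) hj
    rw [show i + (j + 1) + q = i + j + q + 1 by ring, ← add_assoc i j 1] at hnext
    rw [u2_eq_iff hε hx0]
    linarith [hp j hj.le]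

theorem wordIndex_u2_lt_top_iff (hε : ε ∈ Set.Icc (0 : ℝ) 1) (hx0 : x0 ∈ Set.Ico (0 : ℝ) 1) :
    wordIndex (u2 ε x0) < ⊤ ↔ IsBadlyApproximable ε := by
  rw [wordIndex_lt_top_iff]
  constructor
  · rintro ⟨C, hC⟩
    refine ⟨1 / (C + 2), by positivity, fun q hq p => ?_⟩
    have hwindow : 1 ≤ (C * q + 2 : ℕ) * |q * ε - p| := by
      by_contra! hlt
      obtain ⟨i, hi⟩ := exists_window_orbitFloor_add_eq ε x0 hlt
      have hperiod : HasPeriodOn (u2 ε x0) q i (C * q + 1) :=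
        (hasPeriodOn_u2_iff hε hx0 q i _).2 ⟨p, fun j hj => hi j (by omega)⟩
      have := hC q hq i _ hperiod
      omega
    have hlen : ((C * q + 2 : ℕ) : ℝ) ≤ (C + 2) * q := by
      exact_mod_cast (by nlinarith : C * q + 2 ≤ (C + 2) * q)
    rw [div_le_iff₀ (by positivity)]
    nlinarith [mul_le_mul_of_nonneg_right hlen (abs_nonneg (q * ε - p))]
  · intro hbad
    obtain ⟨C, hC⟩ := hbad.exists_orbitFloor_add_ne x0
    refine ⟨C, fun q hq i m h => ?_⟩
    obtain ⟨p, hp⟩ := (hasPeriodOn_u2_iff hε hx0 q i m).1 h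
    obtain ⟨j, hj, hne⟩ := hC i q hq p
    by_contra! hm
    exact hne (hp j (hj.le.trans hm.le))

end Sturmian

/-- a Sturmian word of slope `ε` has finite index iff the partial quotients
of `ε` are bounded. -/
theorem sturmian_finite_index_iff_bounded_partial_quotients
    (ε x0 : ℝ) (hirr : Irrational ε) (h0 : 0 < ε) (h1 : ε < 1)
    (hx0 : x0 ∈ Set.Ico (0:ℝ) 1) :
    wordIndex (u2 ε x0) < ⊤ ↔ ∃ K : ℕ, ∀ n : ℕ, cfa ε n ≤ K := by
  rw [← (hasPartialQuotients_cfa hirr ⟨h0.le, h1⟩).isBadlyApproximable_iff]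
  exact wordIndex_u2_lt_top_iff ⟨h0.le, h1.le⟩ hx0
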